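/- The bilateral weighted shift V with weights (v_n) is a bounded invertible operator on H with bounded inverse, its spectral radii satisfy r(V*) = r(V) = r(V⁻¹) = r((V⁻¹)*) = c, and moreover S(V,c) = S(V⁻¹,c) = S((V*)⁻¹,c) = S(V*,c) = {0}. -/

import Mathlib

noncomputable section

/-- `Hsp` is the complex Hilbert space `ℓ²(ℤ)` of square-summable bilateral
complex sequences. -/
abbrev Hsp : Type := lp (fun _ : ℤ => ℂ) 2

/-- `e n` is the standard orthonormal basis vector `b_n` (indicator sequence of `n`). -/
noncomputable def e (n : ℤ) : Hsp := lp.single 2 n 1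

/-- `S T a` is the set of vectors `x` such that `‖T^N x‖ ≤ M·a^N` for all `N ≥ 0`,
for some constant `M ≥ 0`. -/
def S {X : Type*} [NormedAddCommGroup X] [NormedSpace ℂ X] (T : X →L[ℂ] X) (a : ℝ) : Set X :=
  {x | ∃ M : ℝ, 0 ≤ M ∧ ∀ N : ℕ, ‖(T ^ N) x‖ ≤ M * a ^ N}

/-- `φ(x) = x·sin((π/2)·log₂(1+log₂(1+x)))`. -/
noncomputable def phi (x : ℝ) : ℝ :=
  x * Real.sin (Real.pi / 2 * Real.logb 2 (1 + Real.logb 2 (1 + x)))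

/-- `ψ(x) = √x·sin((π/2)·log₂(1+log₂(1+x)))`. -/
noncomputable def psi (x : ℝ) : ℝ :=
  Real.sqrt x * Real.sin (Real.pi / 2 * Real.logb 2 (1 + Real.logb 2 (1 + x)))

/-- `v_n = c^{φ(|n|)}·e^{ψ(|n|)}`. -/
noncomputable def vw (c : ℝ) (n : ℤ) : ℝ :=
  c ^ phi |(n : ℝ)| * Real.exp (psi |(n : ℝ)|)

open Filter Topology

section WeightedShift

/-- A real function on `ℤ` is *coarsely `L`-Lipschitz* if for every slope larger than `L` it is
Lipschitz with that slope up to a bounded error. -/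
def CoarseLipschitz (L : ℝ) (g : ℤ → ℝ) : Prop :=
  ∀ ε : ℝ, 0 < ε → ∃ C : ℝ, ∀ n d : ℤ, |g n - g (n - d)| ≤ (L + ε) * |(d : ℝ)| + C

lemma CoarseLipschitz.neg {L : ℝ} {g : ℤ → ℝ} (hg : CoarseLipschitz L g) :
    CoarseLipschitz L (-g) := by
  intro ε hε
  obtain ⟨C, hC⟩ := hg ε hε
  refine ⟨C, fun n d => ?_⟩
  rw [Pi.neg_apply, Pi.neg_apply, ← abs_neg]
  simpa [sub_eq_add_neg, add_comm] using hC n d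

lemma CoarseLipschitz.bounded {L : ℝ} {g : ℤ → ℝ} (hg : CoarseLipschitz L g) (d : ℤ) :
    ∃ C : ℝ, ∀ n, g n - g (n - d) ≤ C := by
  obtain ⟨C, hC⟩ := hg 1 one_pos
  exact ⟨_, fun n => (le_abs_self _).trans (hC n d)⟩

/-- The values of the weighted shift by `d` with weight `exp ∘ g`. -/
def shiftFun (g : ℤ → ℝ) (d : ℤ) (f : ℤ → ℂ) (n : ℤ) : ℂ :=
  (Real.exp (g n - g (n - d)) : ℂ) * f (n - d)

lemma norm_shiftFun (g : ℤ → ℝ) (d : ℤ) (f : ℤ → ℂ) (n : ℤ) :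
    ‖shiftFun g d f n‖ = Real.exp (g n - g (n - d)) * ‖f (n - d)‖ := by
  rw [shiftFun, norm_mul, Complex.norm_real, Real.norm_of_nonneg (Real.exp_pos _).le]

lemma norm_sq_shiftFun_le {g : ℤ → ℝ} {d : ℤ} {C : ℝ} (hC : ∀ n, g n - g (n - d) ≤ C)
    (f : ℤ → ℂ) (n : ℤ) : ‖shiftFun g d f n‖ ^ 2 ≤ Real.exp C ^ 2 * ‖f (n - d)‖ ^ 2 := by
  rw [norm_shiftFun, ← mul_pow]
  gcongr
  exact hC n

lemma hsp_summable_sq (f : Hsp) : Summable fun n => ‖f n‖ ^ 2 := by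
  have h := (lp.memℓp f).summable (by norm_num)
  simpa using h

lemma hsp_norm_sq (f : Hsp) : ‖f‖ ^ 2 = ∑' n, ‖f n‖ ^ 2 := by
  have h := lp.norm_rpow_eq_tsum (p := 2) (by norm_num) f
  simpa using h

lemma hsp_summable_sq_shift (f : Hsp) (d : ℤ) : Summable fun n => ‖f (n - d)‖ ^ 2 :=
  (Equiv.subRight d).summable_iff.2 (hsp_summable_sq f)

lemma hsp_tsum_sq_shift (f : Hsp) (d : ℤ) : ∑' n, ‖f (n - d)‖ ^ 2 = ‖f‖ ^ 2 := by
  rw [hsp_norm_sq]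
  exact (Equiv.subRight d).tsum_eq fun n => ‖f n‖ ^ 2

lemma summable_sq_shiftFun {g : ℤ → ℝ} {d : ℤ} {C : ℝ} (hC : ∀ n, g n - g (n - d) ≤ C)
    (f : Hsp) : Summable fun n => ‖shiftFun g d f n‖ ^ 2 :=
  Summable.of_nonneg_of_le (fun _ => sq_nonneg _) (norm_sq_shiftFun_le hC f)
    ((hsp_summable_sq_shift f d).mul_left _)

lemma memℓp_shiftFun {g : ℤ → ℝ} {d : ℤ} (h : ∃ C : ℝ, ∀ n, g n - g (n - d) ≤ C)
    (f : Hsp) : Memℓp (shiftFun g d f) 2 := by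
  obtain ⟨C, hC⟩ := h
  apply memℓp_gen
  simpa using summable_sq_shiftFun hC f

/-- The weighted shift by `d` with weight `exp ∘ g`, as a linear map. -/
def weightedShiftLinear (g : ℤ → ℝ) (d : ℤ) (h : ∃ C : ℝ, ∀ n, g n - g (n - d) ≤ C) :
    Hsp →ₗ[ℂ] Hsp where
  toFun f := ⟨shiftFun g d f, memℓp_shiftFun h f⟩
  map_add' f₁ f₂ := by
    ext n
    simp only [lp.coeFn_add, Pi.add_apply, shiftFun, mul_add]
  map_smul' a f := by
    ext n
    simp [shiftFun, mul_left_comm]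

lemma norm_weightedShiftLinear_le {g : ℤ → ℝ} {d : ℤ} {C : ℝ}
    (hC : ∀ n, g n - g (n - d) ≤ C) (f : Hsp) :
    ‖weightedShiftLinear g d ⟨C, hC⟩ f‖ ≤ Real.exp C * ‖f‖ := by
  rw [← sq_le_sq₀ (norm_nonneg _) (by positivity), hsp_norm_sq, mul_pow,
    ← hsp_tsum_sq_shift f d, ← tsum_mul_left]
  exact (summable_sq_shiftFun hC f).tsum_le_tsum (norm_sq_shiftFun_le hC f)
    ((hsp_summable_sq_shift f d).mul_left _)

/-- The weighted shift `b_n ↦ exp (g (n + d) - g n) b_{n + d}` on `ℓ²(ℤ)`. -/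
def weightedShift (g : ℤ → ℝ) (d : ℤ) (h : ∃ C : ℝ, ∀ n, g n - g (n - d) ≤ C) :
    Hsp →L[ℂ] Hsp :=
  (weightedShiftLinear g d h).mkContinuous (Real.exp h.choose)
    (norm_weightedShiftLinear_le h.choose_spec)

lemma weightedShift_apply {g : ℤ → ℝ} {d : ℤ} (h : ∃ C : ℝ, ∀ n, g n - g (n - d) ≤ C)
    (f : Hsp) (n : ℤ) :
    weightedShift g d h f n = (Real.exp (g n - g (n - d)) : ℂ) * f (n - d) := rfl

lemma norm_weightedShift_le {g : ℤ → ℝ} {d : ℤ} {C : ℝ} (hC : ∀ n, g n - g (n - d) ≤ C) :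
    ‖weightedShift g d ⟨C, hC⟩‖ ≤ Real.exp C :=
  ContinuousLinearMap.opNorm_le_bound _ (Real.exp_pos _).le (norm_weightedShiftLinear_le hC)

lemma weightedShift_single {g : ℤ → ℝ} {d : ℤ} (h : ∃ C : ℝ, ∀ n, g n - g (n - d) ≤ C)
    (n : ℤ) :
    weightedShift g d h (e n) = ((Real.exp (g (n + d) - g n) : ℝ) : ℂ) • e (n + d) := by
  ext m
  rw [weightedShift_apply, lp.coeFn_smul, Pi.smul_apply, smul_eq_mul, e, e,
    lp.single_apply, lp.single_apply]
  by_cases hm : m = n + d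
  · subst hm
    simp
  · have hm' : m - d ≠ n := fun h => hm (by omega)
    simp [hm, hm']

lemma weightedShift_comp {g : ℤ → ℝ} {a b : ℤ} (ha : ∃ C : ℝ, ∀ n, g n - g (n - a) ≤ C)
    (hb : ∃ C : ℝ, ∀ n, g n - g (n - b) ≤ C)
    (hab : ∃ C : ℝ, ∀ n, g n - g (n - (a + b)) ≤ C) :
    weightedShift g a ha ∘L weightedShift g b hb = weightedShift g (a + b) hab := by
  ext f n
  rw [ContinuousLinearMap.comp_apply, weightedShift_apply, weightedShift_apply,
    weightedShift_apply, ← mul_assoc, ← Complex.ofReal_mul, ← Real.exp_add, sub_sub n a b]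
  congr 3
  ring_nf

lemma weightedShift_zero {g : ℤ → ℝ} {d : ℤ} (hd : d = 0)
    (h : ∃ C : ℝ, ∀ n, g n - g (n - d) ≤ C) : weightedShift g d h = 1 := by
  subst hd
  ext f n
  simp [weightedShift_apply]

lemma adjoint_weightedShift {g : ℤ → ℝ} {d : ℤ} (h : ∃ C : ℝ, ∀ n, g n - g (n - d) ≤ C)
    (h' : ∃ C : ℝ, ∀ n, (-g) n - (-g) (n - -d) ≤ C) :
    ContinuousLinearMap.adjoint (weightedShift g d h) = weightedShift (-g) (-d) h' := by
  symm
  rw [ContinuousLinearMap.eq_adjoint_iff]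
  intro x y
  rw [lp.inner_eq_tsum, lp.inner_eq_tsum, ← (Equiv.subRight d).tsum_eq]
  refine tsum_congr fun n => ?_
  have hn : n - d - -d = n := by ring
  simp only [Equiv.subRight_apply, weightedShift_apply, hn, Pi.neg_apply, RCLike.inner_apply,
    map_mul, Complex.conj_ofReal]
  rw [show -g (n - d) - -g n = g n - g (n - d) by ring]
  ring

lemma weightedShift_pow {L : ℝ} {g : ℤ → ℝ} (hg : CoarseLipschitz L g) (d : ℤ) (N : ℕ) :
    weightedShift g d (hg.bounded d) ^ N = weightedShift g (N * d) (hg.bounded _) := by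
  induction N with
  | zero => rw [pow_zero, weightedShift_zero (by simp)]
  | succ N ih =>
    have h : ((N + 1 : ℕ) : ℤ) * d = N * d + d := by push_cast; ring
    rw [pow_succ, ih, ContinuousLinearMap.mul_def, weightedShift_comp _ _ (hg.bounded _)]
    simp only [h]

lemma spectralRadius_le_of_norm_pow_le {A : Type*} [NormedRing A] [NormedAlgebra ℂ A]
    [CompleteSpace A] {T : A} {K a : ℝ} (ha : 0 < a) (h : ∀ N : ℕ, ‖T ^ N‖ ≤ K * a ^ N) :
    spectralRadius ℂ T ≤ ENNReal.ofReal a := by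
  refine iSup₂_le fun k hk => ?_
  rw [← enorm_eq_nnnorm, ← ofReal_norm]
  refine ENNReal.ofReal_le_ofReal ?_
  by_contra! hlt
  have htop := tendsto_pow_atTop_atTop_of_one_lt ((one_lt_div ha).2 hlt)
  obtain ⟨N, hN⟩ := (htop.eventually_gt_atTop (K * ‖(1 : A)‖)).exists
  have hmem := spectrum.norm_le_norm_mul_of_mem (spectrum.pow_mem_pow T N hk)
  rw [norm_pow] at hmem
  rw [div_pow, lt_div_iff₀ (by positivity)] at hN
  have := mul_le_mul_of_nonneg_right (h N) (norm_nonneg (1 : A))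
  nlinarith

lemma spectralRadius_weightedShift_le {L : ℝ} {g : ℤ → ℝ} (hg : CoarseLipschitz L g) {d : ℤ}
    (hd : |d| = 1) :
    spectralRadius ℂ (weightedShift g d (hg.bounded d)) ≤ ENNReal.ofReal (Real.exp L) := by
  have key : ∀ ε : ℝ, 0 < ε → spectralRadius ℂ (weightedShift g d (hg.bounded d)) ≤
      ENNReal.ofReal (Real.exp (L + ε)) := by
    intro ε hε
    obtain ⟨C, hC⟩ := hg ε hε
    refine spectralRadius_le_of_norm_pow_le (K := Real.exp C) (Real.exp_pos _) fun N => ?_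
    rw [weightedShift_pow hg, ← Real.exp_nat_mul, ← Real.exp_add]
    refine norm_weightedShift_le fun n => (le_abs_self _).trans ((hC n _).trans_eq ?_)
    have hd' : |(d : ℝ)| = 1 := by exact_mod_cast hd
    push_cast
    rw [abs_mul, hd', Nat.abs_cast]
    ring
  have hlim : Tendsto (fun ε : ℝ => ENNReal.ofReal (Real.exp (L + ε))) (𝓝[>] 0)
      (𝓝 (ENNReal.ofReal (Real.exp L))) := by
    have hcont : Continuous fun ε : ℝ => ENNReal.ofReal (Real.exp (L + ε)) :=
      ENNReal.continuous_ofReal.comp (by fun_prop)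
    simpa using (hcont.tendsto 0).mono_left nhdsWithin_le_nhds
  exact ge_of_tendsto hlim (eventually_mem_nhdsWithin.mono key)

/-- If `g` infinitely often exceeds `L * |m| + √|m|` on both sides, then the orbit of every
nonzero vector outgrows `exp L ^ N`. -/
lemma frequently_lt_norm_weightedShift_pow {L : ℝ} {g : ℤ → ℝ} (hg : CoarseLipschitz L g)
    (hfreq : ∃ᶠ m : ℕ in atTop, L * m + √m ≤ g m ∧ L * m + √m ≤ g (-m)) {d : ℤ}
    (hd : |d| = 1) {x : Hsp} (hx : x ≠ 0) (M : ℝ) :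
    ∃ᶠ N : ℕ in atTop,
      M * Real.exp L ^ N < ‖(weightedShift g d (hg.bounded d) ^ N) x‖ := by
  obtain ⟨n, hn⟩ : ∃ n, x n ≠ 0 := by
    by_contra! h
    exact hx (lp.ext (funext h))
  have hn' : 0 < ‖x n‖ := norm_pos_iff.2 hn
  have hdd : d * d = 1 := by rw [← abs_mul_abs_self, hd, one_mul]
  rw [frequently_atTop]
  intro N₀
  have hexp : Tendsto (fun m : ℕ => Real.exp √(m : ℝ)) atTop atTop :=
    Real.tendsto_exp_atTop.comp (Real.tendsto_sqrt_atTop.comp tendsto_natCast_atTop_atTop)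
  obtain ⟨m, ⟨hm₁, hm₂⟩, hmM, hmN⟩ := (hfreq.and_eventually
    ((hexp.eventually_gt_atTop (M * Real.exp (g n - L * (n * d)) / ‖x n‖)).and
      (eventually_ge_atTop (N₀ + (n * d).toNat)))).exists
  obtain ⟨N, hN⟩ : ∃ N : ℕ, (N : ℤ) = m - n * d := ⟨(m - n * d).toNat, by omega⟩
  refine ⟨N, by omega, ?_⟩
  have hNd : m * d - N * d = n := by
    rw [hN]
    linear_combination n * hdd
  have hgm : L * m + √m ≤ g (m * d) := by
    rcases (abs_eq zero_le_one).1 hd with rfl | rfl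
    · simpa using hm₁
    · simpa using hm₂
  have hNreal : (N : ℝ) = m - n * d := by exact_mod_cast hN
  have hcoord := lp.norm_apply_le_norm (p := 2) two_ne_zero
    ((weightedShift g d (hg.bounded d) ^ N) x) (m * d)
  refine lt_of_lt_of_le ?_ hcoord
  rw [weightedShift_pow hg, weightedShift_apply, hNd, norm_mul, Complex.norm_real,
    Real.norm_of_nonneg (Real.exp_pos _).le, ← Real.exp_nat_mul]
  rw [div_lt_iff₀ hn'] at hmM
  calc M * Real.exp (N * L)
      = M * Real.exp (g n - L * (n * d)) * Real.exp (L * m - g n) := by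
        rw [mul_assoc, ← Real.exp_add, hNreal]
        ring_nf
    _ < Real.exp √m * ‖x n‖ * Real.exp (L * m - g n) := by gcongr
    _ = Real.exp (L * m + √m - g n) * ‖x n‖ := by
        rw [mul_right_comm, ← Real.exp_add]
        ring_nf
    _ ≤ Real.exp (g (m * d) - g n) * ‖x n‖ := by gcongr

lemma S_weightedShift {L : ℝ} {g : ℤ → ℝ} (hg : CoarseLipschitz L g)
    (hfreq : ∃ᶠ m : ℕ in atTop, L * m + √m ≤ g m ∧ L * m + √m ≤ g (-m)) {d : ℤ}
    (hd : |d| = 1) : S (weightedShift g d (hg.bounded d)) (Real.exp L) = {0} := by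
  ext x
  rw [Set.mem_singleton_iff]
  constructor
  · rintro ⟨M, -, hM⟩
    by_contra hx
    obtain ⟨N, hN⟩ := (frequently_lt_norm_weightedShift_pow hg hfreq hd hx M).exists
    exact (hM N).not_gt hN
  · rintro rfl
    exact ⟨0, le_rfl, fun N => by simp⟩

lemma spectralRadius_weightedShift {L : ℝ} {g : ℤ → ℝ} (hg : CoarseLipschitz L g)
    (hfreq : ∃ᶠ m : ℕ in atTop, L * m + √m ≤ g m ∧ L * m + √m ≤ g (-m)) {d : ℤ}
    (hd : |d| = 1) :
    spectralRadius ℂ (weightedShift g d (hg.bounded d)) = ENNReal.ofReal (Real.exp L) := by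
  refine le_antisymm (spectralRadius_weightedShift_le hg hd) ?_
  by_contra! hlt
  have hx : e 0 ≠ 0 := by
    intro h
    have h0 := congrArg (fun f : Hsp => f 0) h
    simp [e] at h0
  have hev := (spectrum.pow_norm_pow_one_div_tendsto_nhds_spectralRadius
    (weightedShift g d (hg.bounded d))).eventually_lt_const hlt
  obtain ⟨N, hN, hNlt, hN0⟩ := ((frequently_lt_norm_weightedShift_pow hg hfreq hd hx
    ‖e 0‖).and_eventually (hev.and (eventually_gt_atTop 0))).exists
  rw [ENNReal.ofReal_lt_ofReal_iff (Real.exp_pos _)] at hNlt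
  have hpow := pow_le_pow_left₀ (by positivity) hNlt.le N
  rw [one_div, Real.rpow_inv_natCast_pow (norm_nonneg _) hN0.ne'] at hpow
  have hle := (weightedShift g d (hg.bounded d) ^ N).le_opNorm (e 0)
  have := mul_le_mul_of_nonneg_right hpow (norm_nonneg (e 0))
  linarith

end WeightedShift

section LogWeight

/-- The slowly oscillating factor common to `phi` and `psi`. -/
def osc (x : ℝ) : ℝ :=
  Real.sin (Real.pi / 2 * Real.logb 2 (1 + Real.logb 2 (1 + x)))

lemma abs_osc_le_one (x : ℝ) : |osc x| ≤ 1 := Real.abs_sin_le_one _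

lemma abs_osc_sub_le_two (x y : ℝ) : |osc y - osc x| ≤ 2 := by
  have := abs_sub (osc y) (osc x)
  linarith [abs_osc_le_one x, abs_osc_le_one y]

lemma log_sub_log_le {a b : ℝ} (ha : 0 < a) (hb : 0 < b) :
    Real.log b - Real.log a ≤ (b - a) / a := by
  rw [← Real.log_div hb.ne' ha.ne', sub_div, div_self ha.ne']
  exact Real.log_le_sub_one_of_pos (by positivity)

lemma mul_abs_osc_sub_le {x y : ℝ} (hx : 0 ≤ x) (hxy : x ≤ y) :
    x * |osc y - osc x| ≤
      Real.pi / 2 / Real.log 2 ^ 2 / (1 + Real.logb 2 (1 + x)) * (y - x) := by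
  have hlog2 : 0 < Real.log 2 := Real.log_pos one_lt_two
  have hA : 0 < 1 + Real.logb 2 (1 + x) := by
    have := Real.logb_nonneg one_lt_two (by linarith : (1 : ℝ) ≤ 1 + x)
    linarith
  have hAB : Real.logb 2 (1 + x) ≤ Real.logb 2 (1 + y) :=
    Real.logb_le_logb_of_le one_lt_two (by linarith) (by linarith)
  have hlogb : Real.logb 2 (1 + y) - Real.logb 2 (1 + x) ≤ (y - x) / (1 + x) / Real.log 2 := by
    rw [Real.logb, Real.logb, ← sub_div]
    gcongr
    have := log_sub_log_le (by linarith : 0 < 1 + x) (by linarith : 0 < 1 + y)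
    rwa [add_sub_add_left_eq_sub] at this
  have hlogb' : Real.logb 2 (1 + Real.logb 2 (1 + y)) - Real.logb 2 (1 + Real.logb 2 (1 + x)) ≤
      (y - x) / (1 + x) / Real.log 2 / (1 + Real.logb 2 (1 + x)) / Real.log 2 := by
    rw [Real.logb, Real.logb.eq_def 2 (1 + Real.logb 2 (1 + x)), ← sub_div]
    gcongr
    refine (log_sub_log_le hA (by linarith)).trans ?_
    rw [add_sub_add_left_eq_sub]
    gcongr
  have hmono : Real.logb 2 (1 + Real.logb 2 (1 + x)) ≤ Real.logb 2 (1 + Real.logb 2 (1 + y)) :=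
    Real.logb_le_logb_of_le one_lt_two hA (by linarith)
  have hosc : |osc y - osc x| ≤ Real.pi / 2 *
      ((y - x) / (1 + x) / Real.log 2 / (1 + Real.logb 2 (1 + x)) / Real.log 2) := by
    refine (Real.abs_sin_sub_sin_le _ _).trans ?_
    rw [← mul_sub, abs_of_nonneg (mul_nonneg (by positivity) (sub_nonneg.2 hmono))]
    gcongr
  have hfrac : x / (1 + x) ≤ 1 := (div_le_one (by linarith)).2 (by linarith)
  calc x * |osc y - osc x|
      ≤ x * (Real.pi / 2 *
      ((y - x) / (1 + x) / Real.log 2 / (1 + Real.logb 2 (1 + x)) / Real.log 2)) := by gcongr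
    _ = x / (1 + x) *
      (Real.pi / 2 / Real.log 2 ^ 2 / (1 + Real.logb 2 (1 + x)) * (y - x)) := by
        field_simp
    _ ≤ 1 * (Real.pi / 2 / Real.log 2 ^ 2 / (1 + Real.logb 2 (1 + x)) * (y - x)) := by
        have := sub_nonneg.2 hxy
        gcongr
    _ = _ := one_mul _

lemma exists_mul_abs_osc_sub_le {ε : ℝ} (hε : 0 < ε) :
    ∃ C : ℝ, ∀ x y : ℝ, 0 ≤ x → x ≤ y → x * |osc y - osc x| ≤ ε * (y - x) + C := by
  have hlim : Tendsto (fun x : ℝ => Real.pi / 2 / Real.log 2 ^ 2 / (1 + Real.logb 2 (1 + x)))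
      atTop (𝓝 0) :=
    Tendsto.const_div_atTop (tendsto_atTop_add_const_left _ _
      ((Real.tendsto_logb_atTop one_lt_two).comp
        (tendsto_atTop_add_const_left _ _ tendsto_id))) _
  obtain ⟨X, hX⟩ := eventually_atTop.1 (hlim.eventually_lt_const hε)
  refine ⟨2 * |X|, fun x y hx hxy => ?_⟩
  have hyx := sub_nonneg.2 hxy
  rcases le_total X x with h | h
  · have := mul_le_mul_of_nonneg_right (hX x h).le hyx
    linarith [mul_abs_osc_sub_le hx hxy, abs_nonneg X]
  · have := mul_le_mul (h.trans (le_abs_self X)) (abs_osc_sub_le_two x y) (abs_nonneg _)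
      (abs_nonneg X)
    linarith [mul_nonneg hε.le hyx]

lemma abs_mul_osc_sub_le {a b x y : ℝ} (hx : 0 ≤ a) (hxy : a ≤ b) :
    |b * osc y - a * osc x| ≤ (b - a) + a * |osc y - osc x| := by
  have h : b * osc y - a * osc x = (b - a) * osc y + a * (osc y - osc x) := by ring
  rw [h]
  refine (abs_add_le _ _).trans ?_
  rw [abs_mul, abs_mul, abs_of_nonneg hx, abs_of_nonneg (sub_nonneg.2 hxy)]
  have := mul_le_mul_of_nonneg_left (abs_osc_le_one y) (sub_nonneg.2 hxy)
  linarith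

lemma exists_abs_phi_sub_le {ε : ℝ} (hε : 0 < ε) :
    ∃ C : ℝ, ∀ x y : ℝ, 0 ≤ x → x ≤ y → |phi y - phi x| ≤ (1 + ε) * (y - x) + C := by
  obtain ⟨C, hC⟩ := exists_mul_abs_osc_sub_le hε
  refine ⟨C, fun x y hx hxy => ?_⟩
  have h : |phi y - phi x| ≤ (y - x) + x * |osc y - osc x| := abs_mul_osc_sub_le hx hxy
  linarith [hC x y hx hxy]

lemma exists_abs_psi_sub_le {ε : ℝ} (hε : 0 < ε) :
    ∃ C : ℝ, ∀ x y : ℝ, 0 ≤ x → x ≤ y → |psi y - psi x| ≤ ε * (y - x) + C := by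
  obtain ⟨C, hC⟩ := exists_mul_abs_osc_sub_le (half_pos hε)
  refine ⟨1 / (2 * ε) + 2 + C, fun x y hx hxy => ?_⟩
  have h : |psi y - psi x| ≤ (√y - √x) + √x * |osc y - osc x| :=
    abs_mul_osc_sub_le (Real.sqrt_nonneg x) (Real.sqrt_le_sqrt hxy)
  have hsqrt : √x ≤ 1 + x := by
    nlinarith [Real.sq_sqrt hx, sq_nonneg (√x - 1), Real.sqrt_nonneg x]
  have hmul := mul_le_mul_of_nonneg_right hsqrt (abs_nonneg (osc y - osc x))
  have hdiff : √y - √x ≤ ε / 2 * (y - x) + 1 / (2 * ε) := by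
    have hs : √y - √x ≤ √(y - x) := by
      refine Real.le_sqrt_of_sq_le ?_
      nlinarith [Real.sq_sqrt hx, Real.sq_sqrt (hx.trans hxy), Real.sqrt_nonneg x,
        Real.sqrt_le_sqrt hxy]
    have hsq := Real.sq_sqrt (sub_nonneg.2 hxy)
    have hid : ε / 2 * √(y - x) ^ 2 + 1 / (2 * ε) - √(y - x) =
        (ε * √(y - x) - 1) ^ 2 / (2 * ε) := by
      field_simp
      ring
    have : 0 ≤ (ε * √(y - x) - 1) ^ 2 / (2 * ε) := by positivity
    rw [hsq] at hid
    linarith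
  linarith [hC x y hx hxy, abs_osc_sub_le_two x y]

/-- The logarithm of the weight `vw c`, where `L = log c`. -/
def logWeight (L : ℝ) (n : ℤ) : ℝ := L * phi |(n : ℝ)| + psi |(n : ℝ)|

lemma vw_eq_exp_logWeight {c : ℝ} (hc : 0 < c) (n : ℤ) :
    vw c n = Real.exp (logWeight (Real.log c) n) := by
  rw [vw, logWeight, Real.exp_add, Real.rpow_def_of_pos hc]

lemma coarseLipschitz_logWeight {L : ℝ} (hL : 0 ≤ L) : CoarseLipschitz L (logWeight L) := by
  intro ε hε
  have hδ : 0 < ε / (L + 1) := by positivity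
  obtain ⟨C₁, h₁⟩ := exists_abs_phi_sub_le hδ
  obtain ⟨C₂, h₂⟩ := exists_abs_psi_sub_le hδ
  have key : ∀ x y : ℝ, 0 ≤ x → x ≤ y →
      |(L * phi y + psi y) - (L * phi x + psi x)| ≤ (L + ε) * (y - x) + (L * C₁ + C₂) := by
    intro x y hx hxy
    have h : (L * phi y + psi y) - (L * phi x + psi x) =
        L * (phi y - phi x) + (psi y - psi x) := by ring
    rw [h]
    refine (abs_add_le _ _).trans ?_
    rw [abs_mul, abs_of_nonneg hL]
    have := mul_le_mul_of_nonneg_left (h₁ x y hx hxy) hL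
    have hε' : ε = L * (ε / (L + 1)) + ε / (L + 1) := by field_simp
    have hexpand : (L + ε) * (y - x) = L * (y - x) + L * (ε / (L + 1)) * (y - x) +
        ε / (L + 1) * (y - x) := by
      nth_rewrite 1 [hε']
      ring
    linarith [h₂ x y hx hxy]
  refine ⟨L * C₁ + C₂, fun n d => ?_⟩
  have hbound : |logWeight L n - logWeight L (n - d)| ≤
      (L + ε) * |(|(n : ℝ)| - |((n - d : ℤ) : ℝ)|)| + (L * C₁ + C₂) := by
    rcases le_total |((n - d : ℤ) : ℝ)| |(n : ℝ)| with h | h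
    · rw [abs_of_nonneg (sub_nonneg.2 h)]
      exact key _ _ (abs_nonneg _) h
    · rw [abs_sub_comm, abs_sub_comm |(n : ℝ)|, abs_of_nonneg (sub_nonneg.2 h)]
      exact key _ _ (abs_nonneg _) h
  have hdist : |(|(n : ℝ)| - |((n - d : ℤ) : ℝ)|)| ≤ |(d : ℝ)| := by
    refine (abs_abs_sub_abs_le_abs_sub _ _).trans_eq ?_
    push_cast
    rw [sub_sub_cancel]
  have := mul_le_mul_of_nonneg_left hdist (by linarith : 0 ≤ L + ε)
  linarith

/-- The points at which the argument of the sine in `phi` and `psi` equals `π / 2 * j`. -/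
def peak (j : ℕ) : ℕ := 2 ^ (2 ^ j - 1) - 1

lemma le_peak (j : ℕ) : j ≤ peak j := by
  have h₁ : j < 2 ^ j := Nat.lt_two_pow_self
  have h₂ : 2 ^ j - 1 < 2 ^ (2 ^ j - 1) := Nat.lt_two_pow_self
  rw [peak]
  omega

lemma osc_peak (j : ℕ) : osc (peak j) = Real.sin (Real.pi / 2 * j) := by
  have h₁ : (1 : ℝ) + (peak j : ℕ) = 2 ^ (2 ^ j - 1) := by
    rw [peak, Nat.cast_sub Nat.one_le_two_pow]
    push_cast
    ring
  have h₂ : (1 : ℝ) + ((2 ^ j - 1 : ℕ) : ℝ) = 2 ^ j := by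
    rw [Nat.cast_sub Nat.one_le_two_pow]
    push_cast
    ring
  have hlog : ∀ k : ℕ, Real.logb 2 (2 ^ k) = k := fun k => by
    rw [Real.logb_pow, Real.logb_self_eq_one one_lt_two, mul_one]
  rw [osc, h₁, hlog, h₂, hlog]

lemma logWeight_natCast (L : ℝ) (m : ℕ) : logWeight L m = (L * m + √m) * osc m := by
  have h : |((m : ℤ) : ℝ)| = m := by simp
  rw [logWeight, h, phi, psi, osc]
  ring

lemma logWeight_neg (L : ℝ) (n : ℤ) : logWeight L (-n) = logWeight L n := by
  simp [logWeight]

lemma frequently_le_logWeight (L : ℝ) : ∃ᶠ m : ℕ in atTop,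
    L * m + √m ≤ logWeight L m ∧ L * m + √m ≤ logWeight L (-m) := by
  rw [frequently_atTop]
  refine fun k => ⟨peak (4 * k + 1), by linarith [le_peak (4 * k + 1)], ?_⟩
  have hsin : osc (peak (4 * k + 1)) = 1 := by
    rw [osc_peak, ← Real.sin_pi_div_two, ← Real.sin_add_nat_mul_two_pi (Real.pi / 2) k]
    push_cast
    ring_nf
  rw [logWeight_neg, logWeight_natCast, hsin, mul_one]
  exact ⟨le_rfl, le_rfl⟩

lemma frequently_le_neg_logWeight (L : ℝ) : ∃ᶠ m : ℕ in atTop,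
    L * m + √m ≤ (-logWeight L) m ∧ L * m + √m ≤ (-logWeight L) (-m) := by
  rw [frequently_atTop]
  refine fun k => ⟨peak (4 * k + 3), by linarith [le_peak (4 * k + 3)], ?_⟩
  have hsin : osc (peak (4 * k + 3)) = -1 := by
    rw [osc_peak, ← Real.sin_pi_div_two, ← Real.sin_neg,
      ← Real.sin_add_nat_mul_two_pi (-(Real.pi / 2)) (k + 1)]
    push_cast
    ring_nf
  rw [Pi.neg_apply, Pi.neg_apply, logWeight_neg, logWeight_natCast, hsin, mul_neg_one, neg_neg]
  exact ⟨le_rfl, le_rfl⟩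

end LogWeight

/-- The bilateral weighted shift `V` with weights `v_n = c^{φ(|n|)}·e^{ψ(|n|)}` is a
bounded invertible operator on `ℓ²(ℤ)` with bounded inverse,
`r(V*) = r(V) = r(V⁻¹) = r((V⁻¹)*) = c`, and
`S(V,c) = S(V⁻¹,c) = S((V*)⁻¹,c) = S(V*,c) = {0}`. -/
theorem stmt11 (c : ℝ) (hc : 1 ≤ c) :
    ∃ V Vinv : Hsp →L[ℂ] Hsp,
      (∀ n : ℤ, V (e n) = ((vw c (n + 1) / vw c n : ℝ) : ℂ) • e (n + 1)) ∧
      (∀ n : ℤ, Vinv (e n) = ((vw c (n - 1) / vw c n : ℝ) : ℂ) • e (n - 1)) ∧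
      V ∘L Vinv = 1 ∧ Vinv ∘L V = 1 ∧
      spectralRadius ℂ (ContinuousLinearMap.adjoint V) = spectralRadius ℂ V ∧
      spectralRadius ℂ V = spectralRadius ℂ Vinv ∧
      spectralRadius ℂ Vinv = spectralRadius ℂ (ContinuousLinearMap.adjoint Vinv) ∧
      spectralRadius ℂ V = ENNReal.ofReal c ∧
      S V c = {0} ∧ S Vinv c = {0} ∧
      S (ContinuousLinearMap.adjoint Vinv) c = {0} ∧
      S (ContinuousLinearMap.adjoint V) c = {0} := by
  have hc0 : 0 < c := one_pos.trans_le hc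
  have hexp : Real.exp (Real.log c) = c := Real.exp_log hc0
  have hg := coarseLipschitz_logWeight (Real.log_nonneg hc)
  have hfreq := frequently_le_logWeight (Real.log c)
  have hfreq' := frequently_le_neg_logWeight (Real.log c)
  have h1 : |(1 : ℤ)| = 1 := by simp
  have h1' : |(-1 : ℤ)| = 1 := by simp
  have hV : ContinuousLinearMap.adjoint (weightedShift _ 1 (hg.bounded 1)) =
      weightedShift _ (-1) (hg.neg.bounded (-1)) := adjoint_weightedShift _ _
  have hVinv : ContinuousLinearMap.adjoint (weightedShift _ (-1) (hg.bounded (-1))) =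
      weightedShift _ 1 (hg.neg.bounded 1) := adjoint_weightedShift _ (hg.neg.bounded _)
  refine ⟨weightedShift _ 1 (hg.bounded 1), weightedShift _ (-1) (hg.bounded (-1)),
    fun n => ?_, fun n => ?_, ?_, ?_, ?_, ?_, ?_, ?_, ?_, ?_, ?_, ?_⟩
  · rw [weightedShift_single, vw_eq_exp_logWeight hc0, vw_eq_exp_logWeight hc0, Real.exp_sub]
  · rw [weightedShift_single, vw_eq_exp_logWeight hc0, vw_eq_exp_logWeight hc0, Real.exp_sub]
    rfl
  · rw [weightedShift_comp _ _ (hg.bounded _), weightedShift_zero (by norm_num)]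
  · rw [weightedShift_comp _ _ (hg.bounded _), weightedShift_zero (by norm_num)]
  · rw [hV, spectralRadius_weightedShift hg.neg hfreq' h1',
      spectralRadius_weightedShift hg hfreq h1]
  · rw [spectralRadius_weightedShift hg hfreq h1, spectralRadius_weightedShift hg hfreq h1']
  · rw [hVinv, spectralRadius_weightedShift hg.neg hfreq' h1,
      spectralRadius_weightedShift hg hfreq h1']
  · rw [spectralRadius_weightedShift hg hfreq h1, hexp]
  · simpa only [hexp] using S_weightedShift hg hfreq h1
  · simpa only [hexp] using S_weightedShift hg hfreq h1'
  · rw [hVinv]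
    simpa only [hexp] using S_weightedShift hg.neg hfreq' h1
  · rw [hV]
    simpa only [hexp] using S_weightedShift hg.neg hfreq' h1'
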